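/- For every well-formed formula Q and all well-formed formulas A, B of the implicational propositional calculus, the formula (QA ⊃ B) ⊃ [(QQA ⊃ B) ⊃ QQB] is a theorem of IPC. -/

import Mathlib

/-- Well-formed formulas of the implicational propositional calculus:
propositional variables (indexed by ℕ, so the set of wfs is countable)
and the single connective ⊃. -/
inductive Wf where
  | var : ℕ → Wf
  | imp : Wf → Wf → Wf
deriving DecidableEq

infixr:60 " ⊃' " => Wf.imp

/-- `Deduces Γ A` : `A` is deducible from the set `Γ` of extra axioms/hypotheses,
using the three axiom schemes of IPC (including the Peirce scheme) and modus ponens.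
Theorems of IPC are `Deduces ∅ A`; for an extension `M` of IPC with extra-axiom
set `E`, `T(M)` is `Deduces E`, and deducibility from hypotheses `Γ` in `M` is
`Deduces (E ∪ Γ)`. -/
inductive Deduces : Set Wf → Wf → Prop where
  | hyp : ∀ {Γ : Set Wf} {A : Wf}, A ∈ Γ → Deduces Γ A
  | ax1 : ∀ {Γ : Set Wf} (A B : Wf), Deduces Γ (A ⊃' (B ⊃' A))
  | ax2 : ∀ {Γ : Set Wf} (A B C : Wf),
      Deduces Γ ((A ⊃' (B ⊃' C)) ⊃' ((A ⊃' B) ⊃' (A ⊃' C)))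
  | peirce : ∀ {Γ : Set Wf} (A B : Wf), Deduces Γ (((A ⊃' B) ⊃' A) ⊃' A)
  | mp : ∀ {Γ : Set Wf} {A B : Wf}, Deduces Γ (A ⊃' B) → Deduces Γ A → Deduces Γ B

theorem Deduces.ded {Γ : Set Wf} {A B : Wf} (h : Deduces (insert A Γ) B) :
    Deduces Γ (A ⊃' B) := by
  generalize hD : insert A Γ = D at h
  induction h with
  | hyp hm =>
    subst hD
    rcases hm with rfl | hm
    · rename_i C
      exact .mp (.mp (.ax2 C (C ⊃' C) C) (.ax1 C (C ⊃' C))) (.ax1 C C)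
    · exact .mp (.ax1 _ _) (.hyp hm)
  | ax1 X Y => exact .mp (.ax1 _ _) (.ax1 X Y)
  | ax2 X Y Z => exact .mp (.ax1 _ _) (.ax2 X Y Z)
  | peirce X Y => exact .mp (.ax1 _ _) (.peirce X Y)
  | mp _ _ ih1 ih2 => exact .mp (.mp (.ax2 _ _ _) ih1) ih2

/-- Theorem 1(8): (QA ⊃ B) ⊃ [(QQA ⊃ B) ⊃ QQB] is a theorem of IPC. -/
theorem stmt_7 (Q A B : Wf) :
    Deduces ∅ (((A ⊃' Q) ⊃' B) ⊃'
      (((((A ⊃' Q) ⊃' Q) ⊃' B)) ⊃' ((B ⊃' Q) ⊃' Q))) := by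
  refine .ded (.ded (.ded ?_))
  refine .mp (A := B) (.hyp (by simp)) (.mp (A := (A ⊃' Q) ⊃' Q) (.hyp (by simp)) (.ded ?_))
  exact .mp (A := B) (.hyp (by simp)) (.mp (A := A ⊃' Q) (.hyp (by simp)) (.hyp (by simp)))
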